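/- Let n ≥ 11 and let G be a minimizer graph of 𝔾_{n,3}, i.e., a connected simple graph on n vertices with domination number 3 whose spectral radius is minimum among all such graphs. Then there exist integers a ≥ 1, c ≥ 1 and b ≥ 0 with a + b + c = n − 7 such that G is isomorphic to G_2(a,b,c). -/

import Mathlib

open SimpleGraph

/-- Adjacency matrix of a simple graph over ℝ. -/
noncomputable def adjMat {V : Type*} (G : SimpleGraph V) : Matrix V V ℝ :=
  Matrix.of fun i j => @ite ℝ (G.Adj i j) (Classical.propDecidable _) 1 0

/-- Spectral radius: the largest eigenvalue (supremum of the real spectrum)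
of the adjacency matrix. -/
noncomputable def specRad {V : Type*} [Fintype V] [DecidableEq V]
    (G : SimpleGraph V) : ℝ :=
  sSup (spectrum ℝ (adjMat G))

/-- `D` is a dominating set of `G`. -/
def IsDomSet {V : Type*} (G : SimpleGraph V) (D : Finset V) : Prop :=
  ∀ v ∉ D, ∃ u ∈ D, G.Adj u v

/-- The domination number of `G`. -/
noncomputable def domNum {V : Type*} [Fintype V] (G : SimpleGraph V) : ℕ :=
  sInf {k | ∃ D : Finset V, IsDomSet G D ∧ D.card = k}

/-- The tree `G₂(a,b,c)`: the path v1 v4 v5 v2 v6 v7 v3 (vertices `Sum.inl 0, …, Sum.inl 6`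
in path order), with `a` pendant edges at v1, `b` pendant edges at v2 and `c` pendant
edges at v3. -/
def G2graph (a b c : ℕ) : SimpleGraph (Fin 7 ⊕ (Fin a ⊕ Fin b ⊕ Fin c)) :=
  SimpleGraph.fromRel (fun x y =>
    (x = Sum.inl 0 ∧ y = Sum.inl 1) ∨
    (x = Sum.inl 1 ∧ y = Sum.inl 2) ∨
    (x = Sum.inl 2 ∧ y = Sum.inl 3) ∨
    (x = Sum.inl 3 ∧ y = Sum.inl 4) ∨
    (x = Sum.inl 4 ∧ y = Sum.inl 5) ∨
    (x = Sum.inl 5 ∧ y = Sum.inl 6) ∨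
    (∃ j : Fin a, x = Sum.inl 0 ∧ y = Sum.inr (Sum.inl j)) ∨
    (∃ j : Fin b, x = Sum.inl 3 ∧ y = Sum.inr (Sum.inr (Sum.inl j))) ∨
    (∃ j : Fin c, x = Sum.inl 6 ∧ y = Sum.inr (Sum.inr (Sum.inr j))))

open Classical in
/-- Sum of a weight function over the neighbours of a vertex. -/
noncomputable def nsum {V : Type*} [Fintype V] (G : SimpleGraph V) (x : V → ℝ) (v : V) : ℝ :=
  ∑ u, if G.Adj v u then x u else 0

lemma adjMat_mulVec {V : Type*} [Fintype V] (G : SimpleGraph V) (x : V → ℝ) (v : V) :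
    (adjMat G).mulVec x v = nsum G x v := by
  simp [Matrix.mulVec, dotProduct, adjMat, nsum]

lemma adjMat_symm {V : Type*} (G : SimpleGraph V) : (adjMat G).IsHermitian := by
  ext i j
  by_cases h : G.Adj i j
  · simp [adjMat, h, h.symm]
  · have h' : ¬ G.Adj j i := fun e => h e.symm
    simp [adjMat, h, h']

lemma nsum_symm {V : Type*} [Fintype V] (G : SimpleGraph V) (x y : V → ℝ) :
    ∑ v, x v * nsum G y v = ∑ v, nsum G x v * y v := by
  simp only [nsum, Finset.mul_sum, Finset.sum_mul]
  rw [Finset.sum_comm]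
  refine Finset.sum_congr rfl fun a _ => Finset.sum_congr rfl fun b _ => ?_
  by_cases h : G.Adj a b
  · simp [h, h.symm]
  · have h' : ¬ G.Adj b a := fun e => h e.symm
    simp [h, h']

/-- Rayleigh bound and existence of a maximal eigenvector. -/
lemma specRad_facts {V : Type*} [Fintype V] [DecidableEq V] [Nonempty V] (G : SimpleGraph V) :
    (∀ y : V → ℝ, ∑ v, y v * nsum G y v ≤ specRad G * ∑ v, y v * y v) ∧
    (∀ y : V → ℝ, ∑ v, y v * nsum G y v = specRad G * ∑ v, y v * y v →
      ∀ v, nsum G y v = specRad G * y v) ∧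
    (∃ y : V → ℝ, y ≠ 0 ∧ ∀ v, nsum G y v = specRad G * y v) := by
  have hH := adjMat_symm G
  have hspec := hH.spectrum_real_eq_range_eigenvalues
  have hfin : (spectrum ℝ (adjMat G)).Finite := by rw [hspec]; exact Set.finite_range _
  have hne : (spectrum ℝ (adjMat G)).Nonempty := by rw [hspec]; exact Set.range_nonempty _
  have hmem : specRad G ∈ spectrum ℝ (adjMat G) := hne.csSup_mem hfin
  have hle : ∀ a ∈ spectrum ℝ (adjMat G), a ≤ specRad G := fun a ha => le_csSup hfin.bddAbove ha
  set P : Matrix V V ℝ := algebraMap ℝ (Matrix V V ℝ) (specRad G) - adjMat G with hP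
  have hps : P.PosSemidef := by
    rw [Matrix.posSemidef_iff_isHermitian_and_spectrum_nonneg]
    refine ⟨?_, ?_⟩
    · refine Matrix.IsHermitian.sub ?_ hH
      rw [Matrix.algebraMap_eq_diagonal]
      exact Matrix.isHermitian_diagonal _
    · rw [hP, ← spectrum.singleton_sub_eq]
      rintro _ ⟨a, ha, b, hb, rfl⟩
      simp only [Set.mem_singleton_iff] at ha
      subst ha
      simpa using hle b hb
  have hPv : ∀ (y : V → ℝ) v, P.mulVec y v = specRad G * y v - nsum G y v := by
    intro y v
    rw [hP, Matrix.sub_mulVec, Pi.sub_apply, adjMat_mulVec, Matrix.algebraMap_eq_diagonal]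
    simp [Matrix.mulVec_diagonal]
  have hq : ∀ y : V → ℝ, star y ⬝ᵥ (P.mulVec y) =
      specRad G * ∑ v, y v * y v - ∑ v, y v * nsum G y v := by
    intro y
    simp only [dotProduct, hPv, star_trivial, mul_sub, Finset.sum_sub_distrib, Finset.mul_sum]
    congr 1
    exact Finset.sum_congr rfl fun _ _ => by ring
  refine ⟨?_, ?_, ?_⟩
  · intro y
    have := hps.dotProduct_mulVec_nonneg y
    rw [hq] at this
    linarith
  · intro y hy v
    have h0 : star y ⬝ᵥ (P.mulVec y) = 0 := by rw [hq]; linarith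
    rw [hps.dotProduct_mulVec_zero_iff] at h0
    have := congrFun h0 v
    rw [hPv] at this
    simp at this
    linarith
  · rw [hspec] at hmem
    obtain ⟨i, hi⟩ := hmem
    refine ⟨hH.eigenvectorBasis i, ?_, ?_⟩
    · intro h
      have := hH.eigenvectorBasis.orthonormal.ne_zero i
      apply this
      ext v
      exact congrFun h v
    · intro v
      have := congrFun (hH.mulVec_eigenvectorBasis i) v
      rw [adjMat_mulVec] at this
      rw [this, hi]
      simp

/-- Perron vector. -/
lemma exists_perron {V : Type*} [Fintype V] [DecidableEq V] (G : SimpleGraph V)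
    (hG : G.Connected) :
    ∃ x : V → ℝ, (∀ v, 0 < x v) ∧ ∀ v, nsum G x v = specRad G * x v := by
  have := hG.nonempty
  obtain ⟨h1, h2, y, hy0, hy⟩ := specRad_facts G
  have habs : ∀ v, nsum G (fun v => |y v|) v = specRad G * |y v| := by
    apply h2
    apply le_antisymm (h1 _)
    have e1 : ∑ v, |y v| * |y v| = ∑ v, y v * y v := by simp [abs_mul_abs_self]
    rw [e1]
    have e2 : specRad G * ∑ v, y v * y v = ∑ v, y v * nsum G y v := by
      simp only [hy, Finset.mul_sum]
      exact Finset.sum_congr rfl fun _ _ => by ring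
    rw [e2]
    refine Finset.sum_le_sum fun v _ => ?_
    refine (le_abs_self _).trans ?_
    rw [abs_mul]
    refine mul_le_mul_of_nonneg_left ?_ (abs_nonneg _)
    refine (Finset.abs_sum_le_sum_abs _ _).trans ?_
    refine Finset.sum_le_sum fun u _ => ?_
    split_ifs <;> simp
  refine ⟨fun v => |y v|, ?_, habs⟩
  have hstep : ∀ u v, G.Adj u v → y u = 0 → y v = 0 := by
    intro u v huv hu
    have h := habs u
    rw [hu, abs_zero, mul_zero, nsum, Finset.sum_eq_zero_iff_of_nonneg] at h
    · have := h v (Finset.mem_univ _)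
      simpa [huv] using this
    · intro i _
      split_ifs <;> simp
  intro v
  by_contra hv
  have hv0 : y v = 0 := by
    by_contra h
    exact hv (abs_pos.mpr h)
  apply hy0
  funext w
  obtain ⟨p⟩ := hG.preconnected v w
  have : ∀ {a b : V} (p : G.Walk a b), y a = 0 → y b = 0 := by
    intro a b p
    induction p with
    | nil => exact id
    | cons h p ih => exact fun ha => ih (hstep _ _ h ha)
  exact this p hv0

/-- Collatz–Wielandt upper bound. -/
lemma specRad_le_of {V : Type*} [Fintype V] [DecidableEq V] (G : SimpleGraph V)
    (hG : G.Connected) (y : V → ℝ) (hy : ∀ v, 0 < y v) (μ : ℝ)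
    (h : ∀ v, nsum G y v ≤ μ * y v) : specRad G ≤ μ := by
  obtain ⟨z, hz, hzz⟩ := exists_perron G hG
  have := hG.nonempty
  have hpos : 0 < ∑ v, z v * y v :=
    Finset.sum_pos (fun v _ => mul_pos (hz v) (hy v)) Finset.univ_nonempty
  have e := nsum_symm G z y
  have e1 : ∑ v, nsum G z v * y v = specRad G * ∑ v, z v * y v := by
    simp only [hzz, Finset.mul_sum]
    exact Finset.sum_congr rfl fun _ _ => by ring
  have e2 : ∑ v, z v * nsum G y v ≤ μ * ∑ v, z v * y v := by
    rw [Finset.mul_sum]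
    refine Finset.sum_le_sum fun v _ => ?_
    nlinarith [mul_le_mul_of_nonneg_left (h v) (hz v).le]
  rw [e, e1] at e2
  exact le_of_mul_le_mul_right e2 hpos

lemma specRad_lt_of {V : Type*} [Fintype V] [DecidableEq V] (G : SimpleGraph V)
    (hG : G.Connected) (y : V → ℝ) (hy : ∀ v, 0 < y v) (μ : ℝ)
    (h : ∀ v, nsum G y v ≤ μ * y v) (w : V) (hw : nsum G y w < μ * y w) : specRad G < μ := by
  obtain ⟨z, hz, hzz⟩ := exists_perron G hG
  have := hG.nonempty
  have hpos : 0 < ∑ v, z v * y v :=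
    Finset.sum_pos (fun v _ => mul_pos (hz v) (hy v)) Finset.univ_nonempty
  have e := nsum_symm G z y
  have e1 : ∑ v, nsum G z v * y v = specRad G * ∑ v, z v * y v := by
    simp only [hzz, Finset.mul_sum]
    exact Finset.sum_congr rfl fun _ _ => by ring
  have e2 : ∑ v, z v * nsum G y v < μ * ∑ v, z v * y v := by
    rw [Finset.mul_sum]
    refine Finset.sum_lt_sum (fun v _ => ?_) ⟨w, Finset.mem_univ _, ?_⟩
    · nlinarith [mul_le_mul_of_nonneg_left (h v) (hz v).le]
    · nlinarith [mul_lt_mul_of_pos_left hw (hz w)]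
  rw [e, e1] at e2
  exact lt_of_mul_lt_mul_right e2 hpos.le

/-- Strict monotonicity under proper subgraphs. -/
lemma specRad_lt_of_lt {V : Type*} [Fintype V] [DecidableEq V] (K G : SimpleGraph V)
    (hK : K.Connected) (hG : G.Connected) (hKG : K ≤ G) (hne : K ≠ G) :
    specRad K < specRad G := by
  obtain ⟨x, hx, hxx⟩ := exists_perron G hG
  have hex : ∃ u v, G.Adj u v ∧ ¬ K.Adj u v := by
    by_contra hcon
    push Not at hcon
    exact hne (le_antisymm hKG fun u v h => hcon u v h)
  obtain ⟨a, b, hab, hab'⟩ := hex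
  have hterm : ∀ v u, (@ite ℝ (K.Adj v u) (Classical.propDecidable _) (x u) 0) ≤
      @ite ℝ (G.Adj v u) (Classical.propDecidable _) (x u) 0 := by
    intro v u
    by_cases h : K.Adj v u
    · simp [h, hKG h]
    · simp only [h, if_false]
      split_ifs
      · exact (hx u).le
      · exact le_rfl
  refine specRad_lt_of K hK x hx _ (fun v => ?_) a ?_
  · rw [← hxx v]
    exact Finset.sum_le_sum fun u _ => hterm v u
  · rw [← hxx a]
    refine Finset.sum_lt_sum (fun u _ => hterm a u) ⟨b, Finset.mem_univ _, ?_⟩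
    simp [hab, hab', hx b]

lemma specRad_nonneg {V : Type*} [Fintype V] [DecidableEq V] (G : SimpleGraph V)
    (hG : G.Connected) : 0 ≤ specRad G := by
  obtain ⟨x, hx, hxx⟩ := exists_perron G hG
  obtain ⟨v⟩ := hG.nonempty
  have h : 0 ≤ nsum G x v := by
    refine Finset.sum_nonneg fun u _ => ?_
    split_ifs
    · exact (hx u).le
    · exact le_rfl
  rw [hxx v] at h
  exact nonneg_of_mul_nonneg_left h (hx v)

lemma nsum_ge_of_mem {V : Type*} [Fintype V] [DecidableEq V] (G : SimpleGraph V) (x : V → ℝ)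
    (hx : ∀ v, 0 ≤ x v) (v : V) (S : Finset V) (hS : ∀ u ∈ S, G.Adj v u) :
    ∑ u ∈ S, x u ≤ nsum G x v := by
  have h1 : ∑ u ∈ S, x u = ∑ u ∈ S, @ite ℝ (G.Adj v u) (Classical.propDecidable _) (x u) 0 :=
    Finset.sum_congr rfl fun u hu => by simp [hS u hu]
  rw [h1]
  refine Finset.sum_le_sum_of_subset_of_nonneg (Finset.subset_univ _) fun u _ _ => ?_
  split_ifs
  · exact hx u
  · exact le_rfl

lemma nsum_eq_of_iff {V : Type*} [Fintype V] [DecidableEq V] (G : SimpleGraph V) (x : V → ℝ)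
    (v : V) (S : Finset V) (hS : ∀ u, G.Adj v u ↔ u ∈ S) :
    nsum G x v = ∑ u ∈ S, x u := by
  simp [nsum, hS]

lemma exists_cross {V : Type*} (G : SimpleGraph V) (hG : G.Connected) (S : Set V) (a b : V)
    (ha : a ∈ S) (hb : b ∉ S) : ∃ u v, u ∈ S ∧ v ∉ S ∧ G.Adj u v := by
  obtain ⟨p⟩ := hG.preconnected a b
  obtain ⟨d, -, h1, h2⟩ := p.exists_boundary_dart S ha hb
  exact ⟨d.fst, d.snd, h1, h2, d.adj⟩

/-- A proper star in a connected graph forces a strictly larger spectral radius. -/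
lemma card_lt_sq {V : Type*} [Fintype V] [DecidableEq V] (G : SimpleGraph V) (hG : G.Connected)
    (v : V) (S : Finset V) (hS : ∀ u ∈ S, G.Adj v u) (w : V) (hwv : w ≠ v) (hwS : w ∉ S) :
    (S.card : ℝ) < specRad G ^ 2 := by
  obtain ⟨x, hx, hxx⟩ := exists_perron G hG
  have hx0 : ∀ v, 0 ≤ x v := fun v => (hx v).le
  have hn0 : ∀ v, 0 ≤ nsum G x v := fun v => by
    simpa using nsum_ge_of_mem G x hx0 v ∅ (by simp)
  have hnn : nsum G (nsum G x) v = specRad G ^ 2 * x v := by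
    have : nsum G x = fun u => specRad G * x u := funext hxx
    have h2 : nsum G (fun u => specRad G * x u) v = specRad G * nsum G x v := by
      simp only [nsum, Finset.mul_sum]
      exact Finset.sum_congr rfl fun u _ => by split_ifs <;> simp
    rw [this, h2, hxx]; ring
  have hone : ∀ u ∈ S, x v ≤ nsum G x u := fun u hu => by
    simpa using nsum_ge_of_mem G x hx0 u {v} (by simpa using (hS u hu).symm)
  have hsum : (S.card : ℝ) * x v ≤ ∑ u ∈ S, nsum G x u := by
    rw [← nsmul_eq_mul]
    exact Finset.card_nsmul_le_sum _ _ _ hone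
  have key : (S.card : ℝ) * x v < specRad G ^ 2 * x v := by
    rw [← hnn]
    by_cases hex : ∃ u, G.Adj v u ∧ u ∉ S
    · obtain ⟨u, hvu, hu⟩ := hex
      have h1 := nsum_ge_of_mem G (nsum G x) hn0 v (insert u S) (by
        intro t ht
        rcases Finset.mem_insert.mp ht with rfl | ht
        · exact hvu
        · exact hS t ht)
      rw [Finset.sum_insert hu] at h1
      have h2 : x v ≤ nsum G x u := by
        simpa using nsum_ge_of_mem G x hx0 u {v} (by simpa using hvu.symm)
      have := hx v
      linarith
    · push Not at hex
      obtain ⟨a, b, ha, hb, hab⟩ := exists_cross G hG (insert v (S : Set V)) v w (by simp)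
        (by simp [hwv, hwS])
      have hb' : b ≠ v ∧ b ∉ S := by simpa using hb
      have haS : a ∈ S := by
        rcases ha with rfl | ha
        · exact absurd (hex b hab) hb'.2
        · exact ha
      have h1 := nsum_ge_of_mem G (nsum G x) hn0 v S hS
      refine lt_of_lt_of_le ?_ h1
      rw [← nsmul_eq_mul, ← Finset.sum_const]
      refine Finset.sum_lt_sum hone ⟨a, haS, ?_⟩
      have h3 := nsum_ge_of_mem G x hx0 a {v, b} (by
        intro t ht
        simp only [Finset.mem_insert, Finset.mem_singleton] at ht
        rcases ht with rfl | rfl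
        · exact (hS a haS).symm
        · exact hab)
      rw [Finset.sum_pair hb'.1.symm] at h3
      have := hx b
      linarith
  exact lt_of_mul_lt_mul_right key (hx0 v)

lemma deg_le {n : ℕ} (hn : 11 ≤ n) (G : SimpleGraph (Fin n)) (hG : G.Connected)
    (hρ : specRad G ^ 2 ≤ ((n / 3 : ℕ) : ℝ) + 1) (v : Fin n) (S : Finset (Fin n))
    (hS : ∀ u ∈ S, G.Adj v u) : S.card ≤ n / 3 := by
  by_contra hcon
  push Not at hcon
  obtain ⟨S', hS', hc⟩ := Finset.exists_subset_card_eq (Nat.succ_le_of_lt hcon)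
  have hlt : (insert v S').card < (Finset.univ : Finset (Fin n)).card := by
    refine (Finset.card_insert_le _ _).trans_lt ?_
    rw [hc, Finset.card_univ, Fintype.card_fin]
    omega
  obtain ⟨w, -, hw⟩ := Finset.exists_mem_notMem_of_card_lt_card hlt
  simp only [Finset.mem_insert, not_or] at hw
  have := card_lt_sq G hG v S' (fun u hu => hS u (hS' hu)) w hw.1 hw.2
  rw [hc] at this
  push_cast at this
  linarith

lemma domNum_eq_three {n : ℕ} (hn : 11 ≤ n) (G : SimpleGraph (Fin n)) (hG : G.Connected)
    (hρ : specRad G ^ 2 ≤ ((n / 3 : ℕ) : ℝ) + 1) (D : Finset (Fin n)) (hD : IsDomSet G D)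
    (hc : D.card ≤ 3) : domNum G = 3 := by
  classical
  have hne : {k | ∃ D : Finset (Fin n), IsDomSet G D ∧ D.card = k}.Nonempty := ⟨_, D, hD, rfl⟩
  have hle : domNum G ≤ 3 := by
    have hmem : D.card ∈ {k | ∃ D : Finset (Fin n), IsDomSet G D ∧ D.card = k} := ⟨D, hD, rfl⟩
    exact (Nat.sInf_le hmem).trans hc
  by_contra hcon
  obtain ⟨D', hD', hc'⟩ := Nat.sInf_mem hne
  change D'.card = domNum G at hc'
  have hc2 : D'.card ≤ 2 := by omega
  have hcov : (Finset.univ : Finset (Fin n)) ⊆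
      D' ∪ D'.biUnion fun d => Finset.univ.filter fun u => G.Adj d u := by
    intro v _
    by_cases hv : v ∈ D'
    · exact Finset.mem_union_left _ hv
    · obtain ⟨u, hu, huv⟩ := hD' v hv
      refine Finset.mem_union_right _ ?_
      simp only [Finset.mem_biUnion, Finset.mem_filter, Finset.mem_univ, true_and]
      exact ⟨u, hu, huv⟩
  have h1 := Finset.card_le_card hcov
  rw [Finset.card_univ, Fintype.card_fin] at h1
  have h2 := Finset.card_union_le D' (D'.biUnion fun d => Finset.univ.filter fun u => G.Adj d u)
  have h3 := Finset.card_biUnion_le_card_mul D'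
    (fun d => Finset.univ.filter fun u => G.Adj d u) (n / 3)
    (fun d _ => deg_le hn G hG hρ d _ (by simp))
  have h4 : D'.card * (n / 3) ≤ 2 * (n / 3) := Nat.mul_le_mul_right _ hc2
  omega

/-- Replacing the edge `a z` by the edge `b z`. -/
def IsSwap {V : Type*} (G G' : SimpleGraph V) (a b z : V) : Prop :=
  G.Adj a z ∧ ¬ G.Adj b z ∧ b ≠ z ∧ a ≠ b ∧
  ∀ u v, G'.Adj u v ↔ (G.Adj u v ∧ ¬ (u = a ∧ v = z) ∧ ¬ (u = z ∧ v = a)) ∨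
    (u = b ∧ v = z) ∨ (u = z ∧ v = b)

open Classical in
lemma nsum_swap {V : Type*} [Fintype V] [DecidableEq V] (G G' : SimpleGraph V) (a b z : V)
    (h : IsSwap G G' a b z) (y : V → ℝ) (v : V) :
    nsum G' y v = nsum G y v - (if v = a then y z else 0) - (if v = z then y a else 0)
      + (if v = b then y z else 0) + (if v = z then y b else 0) := by
  obtain ⟨h1, h2, h3, h4, h5⟩ := h
  have haz : a ≠ z := h1.ne
  have e : ∀ p q : V, (if v = p then y q else 0) =
      ∑ u, if v = p ∧ u = q then y u else 0 := by
    intro p q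
    by_cases hp : v = p <;> simp [hp]
  rw [e a z, e z a, e b z, e z b]
  simp only [nsum, ← Finset.sum_sub_distrib, ← Finset.sum_add_distrib]
  refine Finset.sum_congr rfl fun u _ => ?_
  have h1' := h1.symm
  have h2' : ¬ G.Adj z b := fun h => h2 h.symm
  by_cases hva : v = a
  · subst hva
    by_cases huz : u = z
    · subst huz; simp [h5, h1, haz, h3, h4, Ne.symm]
    · simp [h5, haz, h4, huz]
  by_cases hvb : v = b
  · subst hvb
    by_cases huz : u = z
    · subst huz; simp [h5, h2, h3, h4.symm]
    · simp [h5, h3, h4.symm, huz]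
  by_cases hvz : v = z
  · subst hvz
    by_cases hua : u = a
    · subst hua; simp [h5, h1', haz, haz.symm, h4]
    by_cases hub : u = b
    · subst hub; simp [h5, h2', h3, h3.symm, h4.symm]
    · simp [h5, hva, hvb, hua, hub]
  · simp [h5, hva, hvb, hvz]

open Classical in
lemma nsum_add_ite {V : Type*} [Fintype V] [DecidableEq V] (G : SimpleGraph V) (x : V → ℝ) (p : V) (δ : ℝ)
    (v : V) : nsum G (fun u => x u + if u = p then δ else 0) v =
      nsum G x v + if G.Adj v p then δ else 0 := by
  have e : (if G.Adj v p then δ else 0) = ∑ u, if u = p then (if G.Adj v u then δ else 0) else 0 := by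
    simp
  rw [e]
  simp only [nsum, ← Finset.sum_add_distrib]
  refine Finset.sum_congr rfl fun u _ => ?_
  by_cases hu : u = p
  · subst hu
    by_cases h : G.Adj v u <;> simp [h]
  · simp [hu]

/-- Moving an edge `c z` to a pendant neighbour `l` of `c` (a subdivision combined with
the deletion of a pendant vertex). -/
lemma moveA {V : Type*} [Fintype V] [DecidableEq V] (G G' : SimpleGraph V) (c l z : V)
    (hG' : G'.Connected) (h : IsSwap G G' c l z)
    (hl : ∀ u, G.Adj l u ↔ u = c) (x : V → ℝ) (hx : ∀ v, 0 < x v) (hρ : 2 ≤ specRad G)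
    (hxx : ∀ v, nsum G x v = specRad G * x v) (hz : x z ≤ (specRad G - 1) * x c) :
    specRad G' < specRad G := by
  classical
  set ρ := specRad G with hρd
  have hρ0 : 0 < ρ := by linarith
  have h' := h
  obtain ⟨h1, h2, h3, h4, h5⟩ := h
  have haz : c ≠ z := h1.ne
  have hl0 : ρ * x l = x c := by
    rw [← hxx, nsum_eq_of_iff G x l {c} (by simpa using hl)]; simp
  set δ := x z / ρ with hδ
  have hδ0 : 0 < δ := div_pos (hx z) hρ0
  have hδρ : ρ * δ = x z := by rw [hδ]; field_simp
  have hvl : ∀ v, G.Adj v l ↔ v = c := fun v => by rw [G.adj_comm]; exact hl v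
  have key : ∀ v, nsum G' (fun u => x u + if u = l then δ else 0) v =
      ρ * x v + (if v = c then δ else 0) - (if v = c then x z else 0) - (if v = z then x c else 0)
      + (if v = l then x z else 0) + (if v = z then x l + δ else 0) := by
    intro v
    rw [nsum_swap G G' c l z h', nsum_add_ite, hxx]
    simp [hvl, h3.symm, h4]
  have hlc : x l + δ ≤ x c := by
    have : ρ * (x l + δ) ≤ ρ * x c := by rw [mul_add, hl0, hδρ]; linarith
    exact le_of_mul_le_mul_left this hρ0
  have hδz : δ < x z := by nlinarith
  refine specRad_lt_of G' hG' (fun u => x u + if u = l then δ else 0) ?_ ρ ?_ c ?_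
  · intro v
    have := hx v
    split_ifs <;> linarith
  · intro v
    rw [key]
    by_cases hvc : v = c
    · subst hvc
      simp only [haz, h4, if_true, if_false]
      linarith
    by_cases hvl : v = l
    · subst hvl
      simp only [h3, hvc, if_true, if_false]
      linarith
    by_cases hvz : v = z
    · subst hvz
      simp only [hvl, hvc, if_true, if_false]
      linarith
    · simp [hvc, hvl, hvz]
  · rw [key]
    simp only [haz, h4, if_true, if_false]
    linarith

/-- Splitting: moving the edge `w z` to another, pendant, neighbour `l` of `c`. -/
lemma moveB {V : Type*} [Fintype V] [DecidableEq V] (G G' : SimpleGraph V) (c w l z z' : V)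
    (hG' : G'.Connected) (h : IsSwap G G' w l z)
    (hl : ∀ u, G.Adj l u ↔ u = c) (hwc : G.Adj w c) (hwz' : G.Adj w z')
    (hcz : c ≠ z) (hcz' : c ≠ z') (hzz' : z ≠ z')
    (x : V → ℝ) (hx : ∀ v, 0 < x v) (hρ : 2 ≤ specRad G)
    (hxx : ∀ v, nsum G x v = specRad G * x v) :
    specRad G' < specRad G := by
  classical
  set ρ := specRad G with hρd
  have hρ0 : 0 < ρ := by linarith
  have h' := h
  obtain ⟨h1, h2, h3, h4, h5⟩ := h
  have haz : w ≠ z := h1.ne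
  have hl0 : ρ * x l = x c := by
    rw [← hxx, nsum_eq_of_iff G x l {c} (by simpa using hl)]; simp
  have hw0 : x c + x z + x z' ≤ ρ * x w := by
    have := nsum_ge_of_mem G x (fun v => (hx v).le) w {c, z, z'} (by
      intro u hu
      simp only [Finset.mem_insert, Finset.mem_singleton] at hu
      rcases hu with rfl | rfl | rfl <;> assumption)
    rw [hxx, Finset.sum_insert (by simp [hcz, hcz']), Finset.sum_pair hzz'] at this
    linarith
  set δ := x z / ρ with hδ
  have hδ0 : 0 < δ := div_pos (hx z) hρ0
  have hδρ : ρ * δ = x z := by rw [hδ]; field_simp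
  have hvl : ∀ v, G.Adj v l ↔ v = c := fun v => by rw [G.adj_comm]; exact hl v
  have hcw : G.Adj c w := hwc.symm
  have hzw : G.Adj z w := h1.symm
  have hlw : ¬ G.Adj l w := by rw [hl]; exact hwc.ne
  have hc := hx c
  have hz := hx z
  have hz' := hx z'
  have hδw : δ < x w := by nlinarith
  have hlδ : x l + δ < x w := by
    have : ρ * (x l + δ) < ρ * x w := by rw [mul_add, hl0, hδρ]; linarith
    exact lt_of_mul_lt_mul_left this hρ0.le
  have key : ∀ v, nsum G' (fun u => (x u + if u = l then δ else 0) + if u = w then -δ else 0) v =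
      ρ * x v + (if v = c then δ else 0) + (if G.Adj v w then -δ else 0)
      - (if v = w then x z else 0) - (if v = z then x w + -δ else 0)
      + (if v = l then x z else 0) + (if v = z then x l + δ else 0) := by
    intro v
    rw [nsum_swap G G' w l z h', nsum_add_ite, nsum_add_ite, hxx]
    simp [hvl, h3.symm, h4, h4.symm, haz.symm]
  have hle : ∀ v, (if G.Adj v w then -δ else 0) ≤ 0 := by
    intro v; split_ifs <;> linarith
  refine specRad_lt_of G' hG' _ ?_ ρ (fun v => (key v).trans_le ?_) z ((key z).trans_lt ?_)
  · intro v
    have := hx v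
    by_cases hvw : v = w
    · subst hvw
      simp only [h4, if_true, if_false]; linarith
    · simp only [hvw, if_false]
      split_ifs <;> linarith
  · by_cases hvw : v = w
    · subst hvw
      have : ¬ G.Adj v v := G.irrefl
      simp only [haz, hwc.ne, h4, this, if_true, if_false]
      linarith
    by_cases hvc : v = c
    · subst hvc
      have hvl' : v ≠ l := by
        rintro rfl
        exact G.irrefl ((hl v).mpr rfl)
      simp only [hcz, hvw, hvl', hcw, if_true, if_false]
      linarith
    by_cases hvl : v = l
    · subst hvl
      simp only [h3, hvc, hvw, hlw, if_true, if_false]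
      linarith
    by_cases hvz : v = z
    · subst hvz
      simp only [hvl, hvc, hvw, hzw, if_true, if_false]
      linarith
    · have := hle v
      simp only [hvw, hvc, hvl, hvz, if_false]
      linarith
  · simp only [hcz.symm, h3.symm, haz.symm, hzw, if_true, if_false]
    linarith

/-- A connected graph with at least four pendant vertices has spectral radius at least two. -/
lemma two_le_specRad {V : Type*} [Fintype V] [DecidableEq V] (G : SimpleGraph V)
    (hG : G.Connected) (L : Finset V) (hL : 4 ≤ L.card)
    (hdeg : ∀ v ∈ L, ∃ c, ∀ u, G.Adj v u ↔ u = c) : 2 ≤ specRad G := by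
  classical
  have := hG.nonempty
  obtain ⟨h1, -, -⟩ := specRad_facts G
  set y : V → ℝ := fun v => if v ∈ L then 1 else 2 with hy
  have hm : (Fintype.card V : ℝ) ≤ (G.edgeFinset.card : ℝ) + 1 := by
    have := hG.card_vert_le_card_edgeSet_add_one
    rw [Nat.card_eq_fintype_card, Nat.card_eq_fintype_card, ← SimpleGraph.edgeFinset_card] at this
    exact_mod_cast this
  have hns1 : ∀ v, nsum G (fun _ => (1 : ℝ)) v = G.degree v := by
    intro v
    rw [nsum_eq_of_iff G _ v (G.neighborFinset v) (by simp)]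
    simp
  have hL1 : ∀ v ∈ L, nsum G (fun _ => (1 : ℝ)) v = 1 := by
    intro v hv
    obtain ⟨c, hc⟩ := hdeg v hv
    rw [nsum_eq_of_iff G _ v {c} (by simpa using hc)]; simp
  set i : V → ℝ := fun v => if v ∈ L then 1 else 0 with hi
  have hsum1 : ∑ v, nsum G (fun _ => (1 : ℝ)) v = 2 * (G.edgeFinset.card : ℝ) := by
    simp only [hns1]
    have := G.sum_degrees_eq_twice_card_edges
    exact_mod_cast this
  have hiL : ∑ v, i v = L.card := by simp [hi]
  have hin1 : ∑ v, i v * nsum G (fun _ => (1 : ℝ)) v = L.card := by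
    rw [← hiL]
    refine Finset.sum_congr rfl fun v _ => ?_
    by_cases hv : v ∈ L
    · rw [hL1 v hv, mul_one]
    · simp [hi, hv]
  have hini : 0 ≤ ∑ v, i v * nsum G i v := by
    refine Finset.sum_nonneg fun v _ => mul_nonneg ?_ (Finset.sum_nonneg fun u _ => ?_)
    · simp only [hi]; split_ifs <;> norm_num
    · simp only [hi]; split_ifs <;> norm_num
  have h1i : ∑ v, nsum G i v = L.card := by
    have := nsum_symm G (fun _ => (1 : ℝ)) i
    simp only [one_mul] at this
    rw [this, ← hin1]
    exact Finset.sum_congr rfl fun _ _ => mul_comm _ _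
  have hny : ∀ v, nsum G y v = 2 * nsum G (fun _ => (1 : ℝ)) v - nsum G i v := by
    intro v
    simp only [nsum, Finset.mul_sum, ← Finset.sum_sub_distrib]
    refine Finset.sum_congr rfl fun u _ => ?_
    simp only [hy, hi]
    split_ifs <;> norm_num
  have hyi : ∀ v, y v = 2 - i v := by
    intro v; simp only [hy, hi]; split_ifs <;> norm_num
  have hyy : ∑ v, y v * y v = 4 * Fintype.card V - 3 * L.card := by
    have : ∀ v, y v * y v = 4 - 3 * i v := by
      intro v; simp only [hy, hi]; split_ifs <;> norm_num
    simp only [this, Finset.sum_sub_distrib, ← Finset.mul_sum, hiL]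
    simp; ring
  have hyn : ∑ v, y v * nsum G y v = 8 * (G.edgeFinset.card : ℝ) - 4 * L.card
      + ∑ v, i v * nsum G i v := by
    have : ∀ v, y v * nsum G y v = 4 * nsum G (fun _ => (1 : ℝ)) v - 2 * nsum G i v
        - 2 * (i v * nsum G (fun _ => (1 : ℝ)) v) + i v * nsum G i v := by
      intro v; rw [hny, hyi]; ring
    simp only [this, Finset.sum_sub_distrib, Finset.sum_add_distrib, ← Finset.mul_sum, hsum1, h1i,
      hin1]
    ring
  have h := h1 y
  rw [hyn, hyy] at h
  have hL' : (4 : ℝ) ≤ L.card := by exact_mod_cast hL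
  have hcard : (L.card : ℝ) ≤ Fintype.card V := by exact_mod_cast Finset.card_le_univ L
  by_contra hcon
  push Not at hcon
  nlinarith

/-- Three stars (given by the map `cen` sending each vertex to the centre of its star) with
centres `c0, c1, c2`, and two edges `x1 x2`, `y2 y3` joining consecutive stars. -/
structure Cfg {V : Type*} (cen : V → V) (c0 c1 c2 x1 x2 y2 y3 : V) : Prop where
  h01 : c0 ≠ c1
  h02 : c0 ≠ c2
  h12 : c1 ≠ c2
  e0 : cen c0 = c0
  e1 : cen c1 = c1
  e2 : cen c2 = c2
  hc : ∀ v, cen v = c0 ∨ cen v = c1 ∨ cen v = c2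
  hx1 : cen x1 = c0
  hx2 : cen x2 = c1
  hy2 : cen y2 = c1
  hy3 : cen y3 = c2

/-- The tree described by a configuration. -/
def cfgGraph {V : Type*} (cen : V → V) (x1 x2 y2 y3 : V) : SimpleGraph V :=
  SimpleGraph.fromRel (fun u v => cen u = v ∨ (u = x1 ∧ v = x2) ∨ (u = y2 ∧ v = y3))

lemma cfg_adj {V : Type*} (cen : V → V) (x1 x2 y2 y3 u v : V) :
    (cfgGraph cen x1 x2 y2 y3).Adj u v ↔ u ≠ v ∧ (cen u = v ∨ cen v = u ∨
      (u = x1 ∧ v = x2) ∨ (v = x1 ∧ u = x2) ∨ (u = y2 ∧ v = y3) ∨ (v = y2 ∧ u = y3)) := by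
  simp only [cfgGraph, SimpleGraph.fromRel_adj]
  tauto

lemma cfg_rev {V : Type*} (cen : V → V) (x1 x2 y2 y3 : V) :
    cfgGraph cen y3 y2 x2 x1 = cfgGraph cen x1 x2 y2 y3 := by
  ext u v
  simp only [cfg_adj]
  tauto

lemma Cfg.rev {V : Type*} {cen : V → V} {c0 c1 c2 x1 x2 y2 y3 : V}
    (h : Cfg cen c0 c1 c2 x1 x2 y2 y3) : Cfg cen c2 c1 c0 y3 y2 x2 x1 where
  h01 := h.h12.symm
  h02 := h.h02.symm
  h12 := h.h01.symm
  e0 := h.e2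
  e1 := h.e1
  e2 := h.e0
  hc := fun v => by have := h.hc v; tauto
  hx1 := h.hy3
  hx2 := h.hy2
  hy2 := h.hx2
  hy3 := h.hx1

lemma Cfg.connected {V : Type*} {cen : V → V} {c0 c1 c2 x1 x2 y2 y3 : V}
    (h : Cfg cen c0 c1 c2 x1 x2 y2 y3) : (cfgGraph cen x1 x2 y2 y3).Connected := by
  have hcen : ∀ v, (cfgGraph cen x1 x2 y2 y3).Reachable v (cen v) := by
    intro v
    by_cases hv : v = cen v
    · rw [← hv]
    · exact SimpleGraph.Adj.reachable (by rw [cfg_adj]; exact ⟨hv, Or.inl rfl⟩)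
  have hx12 : x1 ≠ x2 := by
    intro e; apply h.h01; rw [← h.hx1, e, h.hx2]
  have hy23 : y2 ≠ y3 := by
    intro e; apply h.h12; rw [← h.hy2, e, h.hy3]
  have ax : (cfgGraph cen x1 x2 y2 y3).Reachable x1 x2 :=
    SimpleGraph.Adj.reachable (by rw [cfg_adj]; simp [hx12])
  have ay : (cfgGraph cen x1 x2 y2 y3).Reachable y2 y3 :=
    SimpleGraph.Adj.reachable (by rw [cfg_adj]; simp [hy23])
  have r0 := hcen x1
  rw [h.hx1] at r0
  have r1 := hcen x2
  rw [h.hx2] at r1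
  have r2 := hcen y2
  rw [h.hy2] at r2
  have r3 := hcen y3
  rw [h.hy3] at r3
  have r01 := (r0.symm.trans ax).trans r1
  have r12 := (r2.symm.trans ay).trans r3
  have hall : ∀ v, (cfgGraph cen x1 x2 y2 y3).Reachable v c1 := by
    intro v
    have := hcen v
    rcases h.hc v with e | e | e <;> rw [e] at this
    · exact this.trans r01
    · exact this
    · exact this.trans r12.symm
  have : Nonempty V := ⟨c0⟩
  exact ⟨fun u v => (hall u).trans (hall v).symm⟩

lemma Cfg.dom {V : Type*} [DecidableEq V] {cen : V → V} {c0 c1 c2 x1 x2 y2 y3 : V}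
    (h : Cfg cen c0 c1 c2 x1 x2 y2 y3) : IsDomSet (cfgGraph cen x1 x2 y2 y3) {c0, c1, c2} := by
  intro v hv
  refine ⟨cen v, ?_, ?_⟩
  · have := h.hc v
    simpa using this
  · rw [cfg_adj]
    refine ⟨?_, Or.inr (Or.inl rfl)⟩
    rintro e
    apply hv
    have := h.hc v
    rw [e] at this
    simpa using this

lemma Cfg.of_edges {V : Type*} (G : SimpleGraph V) (cen : V → V) (c0 c1 c2 x1 x2 y2 y3 : V)
    (h : Cfg cen c0 c1 c2 x1 x2 y2 y3) (hcen : ∀ v, v = cen v ∨ G.Adj (cen v) v)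
    (hx : G.Adj x1 x2) (hy : G.Adj y2 y3) : cfgGraph cen x1 x2 y2 y3 ≤ G := by
  intro u v huv
  rw [cfg_adj] at huv
  obtain ⟨hne, e | e | ⟨rfl, rfl⟩ | ⟨rfl, rfl⟩ | ⟨rfl, rfl⟩ | ⟨rfl, rfl⟩⟩ := huv
  · rcases hcen u with h' | h'
    · exact absurd (h'.trans e) hne
    · rw [e] at h'; exact h'.symm
  · rcases hcen v with h' | h'
    · exact absurd (h'.trans e).symm hne
    · rw [e] at h'; exact h'
  · exact hx
  · exact hx.symm
  · exact hy
  · exact hy.symm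

lemma exists_cfg {n : ℕ} (G : SimpleGraph (Fin n)) (hG : G.Connected) (hd : domNum G = 3) :
    ∃ cen c0 c1 c2 x1 x2 y2 y3, Cfg cen c0 c1 c2 x1 x2 y2 y3 ∧ cfgGraph cen x1 x2 y2 y3 ≤ G := by
  have hne : {k | ∃ D : Finset (Fin n), IsDomSet G D ∧ D.card = k}.Nonempty := by
    by_contra h
    rw [Set.not_nonempty_iff_eq_empty] at h
    rw [domNum, h] at hd
    simp at hd
  obtain ⟨D, hD, hDc⟩ := Nat.sInf_mem hne
  change D.card = domNum G at hDc
  rw [hd, Finset.card_eq_three] at hDc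
  obtain ⟨a, b, c, hab, hac, hbc, rfl⟩ := hDc
  have hex : ∀ v, ∃ w, (w = a ∨ w = b ∨ w = c) ∧ ((v = a ∨ v = b ∨ v = c) → w = v) ∧
      (v = w ∨ G.Adj w v) := by
    intro v
    by_cases hv : v = a ∨ v = b ∨ v = c
    · exact ⟨v, hv, fun _ => rfl, Or.inl rfl⟩
    · obtain ⟨u, hu, huv⟩ := hD v (by simpa using hv)
      exact ⟨u, by simpa using hu, fun h => absurd h hv, Or.inr huv⟩
  choose cen h1 h2 h3 using hex
  have ea : cen a = a := h2 a (by simp)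
  have eb : cen b = b := h2 b (by simp)
  have ec : cen c = c := h2 c (by simp)
  have build : ∀ p q r x1 x2 y2 y3, p ≠ q → p ≠ r → q ≠ r → cen p = p → cen q = q → cen r = r →
      (∀ v, cen v = p ∨ cen v = q ∨ cen v = r) → cen x1 = p → cen x2 = q → cen y2 = q →
      cen y3 = r → G.Adj x1 x2 → G.Adj y2 y3 →
      ∃ cen c0 c1 c2 x1 x2 y2 y3, Cfg cen c0 c1 c2 x1 x2 y2 y3 ∧
        cfgGraph cen x1 x2 y2 y3 ≤ G := by
    intro p q r x1 x2 y2 y3 hpq hpr hqr ep eq er hall e1 e2 e3 e4 ax ay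
    have hC : Cfg cen p q r x1 x2 y2 y3 := ⟨hpq, hpr, hqr, ep, eq, er, hall, e1, e2, e3, e4⟩
    exact ⟨cen, p, q, r, x1, x2, y2, y3, hC, Cfg.of_edges G cen p q r x1 x2 y2 y3 hC h3 ax ay⟩
  obtain ⟨u, v, hu, hv, huv⟩ := exists_cross G hG {v | cen v = a} a b (by simpa using ea)
    (by simp [eb, hab.symm])
  simp only [Set.mem_setOf_eq] at hu hv
  rcases (h1 v).resolve_left hv with hv | hv
  · obtain ⟨s, t, hs, ht, hst⟩ := exists_cross G hG {v | cen v = a ∨ cen v = b} a c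
      (by simp [ea]) (by simp [ec, hac.symm, hbc.symm])
    simp only [Set.mem_setOf_eq, not_or] at hs ht
    have ht' : cen t = c := ((h1 t).resolve_left ht.1).resolve_left ht.2
    rcases hs with hs | hs
    · exact build b a c v u s t hab.symm hbc hac eb ea ec (fun v => by have := h1 v; tauto)
        hv hu hs ht' huv.symm hst
    · exact build a b c u v s t hab hac hbc ea eb ec h1 hu hv hs ht' huv hst
  · obtain ⟨s, t, hs, ht, hst⟩ := exists_cross G hG {v | cen v = a ∨ cen v = c} a b
      (by simp [ea]) (by simp [eb, hab.symm, hbc])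
    simp only [Set.mem_setOf_eq, not_or] at hs ht
    have ht' : cen t = b := by have := h1 t; tauto
    rcases hs with hs | hs
    · exact build c a b v u s t hac.symm hbc.symm hab ec ea eb (fun v => by have := h1 v; tauto)
        hv hu hs ht' huv.symm hst
    · exact build a c b u v s t hac hab hbc.symm ea ec eb (fun v => by have := h1 v; tauto)
        hu hv hs ht' huv hst

lemma Cfg.swap0 {V : Type*} {cen : V → V} {c0 c1 c2 x2 y2 y3 l : V}
    (h : Cfg cen c0 c1 c2 c0 x2 y2 y3) (hl : cen l = c0) (hl0 : l ≠ c0) :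
    IsSwap (cfgGraph cen c0 x2 y2 y3) (cfgGraph cen l x2 y2 y3) c0 l x2 ∧
      (∀ u, (cfgGraph cen c0 x2 y2 y3).Adj l u ↔ u = c0) ∧ Cfg cen c0 c1 c2 l x2 y2 y3 := by
  obtain ⟨h01, h02, h12, e0, e1, e2, hc, hx1, hx2, hy2, hy3⟩ := h
  refine ⟨⟨?_, ?_, ?_, ?_, ?_⟩, ?_, ⟨h01, h02, h12, e0, e1, e2, hc, hl, hx2, hy2, hy3⟩⟩
  · rw [cfg_adj]; grind
  · rw [cfg_adj]; grind
  · grind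
  · grind
  · intro u v; simp only [cfg_adj]; grind
  · intro u; simp only [cfg_adj]; grind

lemma Cfg.swap1 {V : Type*} {cen : V → V} {c0 c1 c2 x1 y2 y3 l : V}
    (h : Cfg cen c0 c1 c2 x1 c1 y2 y3) (hl : cen l = c1) (hl0 : l ≠ c1) (hl2 : l ≠ y2) :
    IsSwap (cfgGraph cen x1 c1 y2 y3) (cfgGraph cen x1 l y2 y3) c1 l x1 ∧
      (∀ u, (cfgGraph cen x1 c1 y2 y3).Adj l u ↔ u = c1) ∧ Cfg cen c0 c1 c2 x1 l y2 y3 := by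
  obtain ⟨h01, h02, h12, e0, e1, e2, hc, hx1, hx2, hy2, hy3⟩ := h
  refine ⟨⟨?_, ?_, ?_, ?_, ?_⟩, ?_, ⟨h01, h02, h12, e0, e1, e2, hc, hx1, hl, hy2, hy3⟩⟩
  · rw [cfg_adj]; grind
  · rw [cfg_adj]; grind
  · grind
  · grind
  · intro u v; simp only [cfg_adj]; grind
  · intro u; simp only [cfg_adj]; grind

lemma Cfg.swap2 {V : Type*} {cen : V → V} {c0 c1 c2 x1 w y3 l : V}
    (h : Cfg cen c0 c1 c2 x1 w w y3) (hw : w ≠ c1) (hl : cen l = c1) (hl0 : l ≠ c1)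
    (hlw : l ≠ w) :
    IsSwap (cfgGraph cen x1 w w y3) (cfgGraph cen x1 w l y3) w l y3 ∧
      (∀ u, (cfgGraph cen x1 w w y3).Adj l u ↔ u = c1) ∧ Cfg cen c0 c1 c2 x1 w l y3 := by
  obtain ⟨h01, h02, h12, e0, e1, e2, hc, hx1, hx2, hy2, hy3⟩ := h
  refine ⟨⟨?_, ?_, ?_, ?_, ?_⟩, ?_, ⟨h01, h02, h12, e0, e1, e2, hc, hx1, hx2, hl, hy3⟩⟩
  · rw [cfg_adj]; grind
  · rw [cfg_adj]; grind
  · grind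
  · grind
  · intro u v; simp only [cfg_adj]; grind
  · intro u; simp only [cfg_adj]; grind

/-- What we use about a minimizer. -/
structure MinG {n : ℕ} (G : SimpleGraph (Fin n)) : Prop where
  hn : 11 ≤ n
  conn : G.Connected
  hρ : specRad G ^ 2 ≤ ((n / 3 : ℕ) : ℝ) + 1
  two : 2 ≤ specRad G
  min : ∀ (cen : Fin n → Fin n) (c0 c1 c2 x1 x2 y2 y3 : Fin n), Cfg cen c0 c1 c2 x1 x2 y2 y3 →
    ¬ (specRad (cfgGraph cen x1 x2 y2 y3) < specRad G)

/-- The leaves of the star with centre `c`. -/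
def starLeaves {n : ℕ} (cen : Fin n → Fin n) (c : Fin n) : Finset (Fin n) :=
  Finset.univ.filter fun v => cen v = c ∧ v ≠ c

lemma mem_starLeaves {n : ℕ} (cen : Fin n → Fin n) (c v : Fin n) :
    v ∈ starLeaves cen c ↔ cen v = c ∧ v ≠ c := by simp [starLeaves]

lemma Cfg.count {n : ℕ} {cen : Fin n → Fin n} {c0 c1 c2 x1 x2 y2 y3 : Fin n}
    (h : Cfg cen c0 c1 c2 x1 x2 y2 y3) :
    (starLeaves cen c0).card + (starLeaves cen c1).card + (starLeaves cen c2).card + 3 = n := by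
  have hd01 : Disjoint (starLeaves cen c0) (starLeaves cen c1) := by
    rw [Finset.disjoint_left]
    intro v h0 h1
    rw [mem_starLeaves] at h0 h1
    exact h.h01 (h0.1.symm.trans h1.1)
  have hd2 : Disjoint (starLeaves cen c0 ∪ starLeaves cen c1) (starLeaves cen c2) := by
    rw [Finset.disjoint_left]
    intro v h0 h1
    rw [Finset.mem_union, mem_starLeaves, mem_starLeaves] at h0
    rw [mem_starLeaves] at h1
    rcases h0 with h0 | h0
    · exact h.h02 (h0.1.symm.trans h1.1)
    · exact h.h12 (h0.1.symm.trans h1.1)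
  have hd3 : Disjoint (starLeaves cen c0 ∪ starLeaves cen c1 ∪ starLeaves cen c2)
      {c0, c1, c2} := by
    rw [Finset.disjoint_right]
    intro v hv
    simp only [Finset.mem_insert, Finset.mem_singleton] at hv
    simp only [Finset.mem_union, mem_starLeaves]
    have := h.h01
    have := h.h02
    have := h.h12
    have := h.e0
    have := h.e1
    have := h.e2
    grind
  have hU : (starLeaves cen c0 ∪ starLeaves cen c1 ∪ starLeaves cen c2) ∪ {c0, c1, c2}
      = Finset.univ := by
    ext v
    simp only [Finset.mem_union, mem_starLeaves, Finset.mem_insert, Finset.mem_singleton,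
      Finset.mem_univ, iff_true]
    have := h.hc v
    tauto
  have := congrArg Finset.card hU
  rw [Finset.card_union_of_disjoint hd3, Finset.card_union_of_disjoint hd2,
    Finset.card_union_of_disjoint hd01, Finset.card_univ, Fintype.card_fin,
    Finset.card_eq_three.mpr ⟨c0, c1, c2, h.h01, h.h02, h.h12, rfl⟩] at this
  exact this

lemma Cfg.leaves_le {n : ℕ} {cen : Fin n → Fin n} {x1 x2 y2 y3 : Fin n}
    (hM : MinG (cfgGraph cen x1 x2 y2 y3)) (c : Fin n) :
    (starLeaves cen c).card ≤ n / 3 := by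
  refine deg_le hM.hn _ hM.conn hM.hρ c _ fun u hu => ?_
  rw [mem_starLeaves] at hu
  rw [cfg_adj]
  exact ⟨hu.2.symm, Or.inr (Or.inl hu.1)⟩

lemma Cfg.leaves_lt {n : ℕ} {cen : Fin n → Fin n} {c0 c1 c2 x2 y2 y3 : Fin n}
    (h : Cfg cen c0 c1 c2 c0 x2 y2 y3) (hM : MinG (cfgGraph cen c0 x2 y2 y3)) :
    (starLeaves cen c0).card + 1 ≤ n / 3 := by
  have hx : x2 ∉ starLeaves cen c0 := by
    rw [mem_starLeaves, h.hx2]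
    exact fun e => h.h01 e.1.symm
  rw [← Finset.card_insert_of_notMem hx]
  refine deg_le hM.hn _ hM.conn hM.hρ c0 _ fun u hu => ?_
  rw [Finset.mem_insert, mem_starLeaves] at hu
  rw [cfg_adj]
  rcases hu with rfl | hu
  · refine ⟨?_, by simp⟩
    rintro rfl
    exact h.h01 (h.e0.symm.trans h.hx2)
  · exact ⟨hu.2.symm, Or.inr (Or.inl hu.1)⟩

/-- No minimizer has a joining edge between two centres. -/
lemma claim1 {n : ℕ} {cen : Fin n → Fin n} {c0 c1 c2 y2 y3 : Fin n}
    (h : Cfg cen c0 c1 c2 c0 c1 y2 y3) (hM : MinG (cfgGraph cen c0 c1 y2 y3)) : False := by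
  obtain ⟨x, hx, hxx⟩ := exists_perron _ hM.conn
  have hn := hM.hn
  have hcount := h.count
  have h0 := h.leaves_lt hM
  have h1 := Cfg.leaves_le hM c1
  have h2 := Cfg.leaves_le hM c2
  have hρ := hM.two
  rcases le_total (x c1) (x c0) with hle | hle
  · have hpos : 0 < (starLeaves cen c0).card := by omega
    obtain ⟨l, hl⟩ := Finset.card_pos.mp hpos
    rw [mem_starLeaves] at hl
    obtain ⟨s1, s2, s3⟩ := h.swap0 hl.1 hl.2
    refine hM.min _ _ _ _ _ _ _ _ s3 (moveA _ _ _ _ _ s3.connected s1 s2 x hx hρ hxx ?_)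
    have := hx c0
    nlinarith
  · have hpos : 1 < (starLeaves cen c1).card := by omega
    obtain ⟨l, hl, hly⟩ := Finset.exists_mem_ne hpos y2
    rw [mem_starLeaves] at hl
    obtain ⟨s1, s2, s3⟩ := h.swap1 hl.1 hl.2 hly
    refine hM.min _ _ _ _ _ _ _ _ s3 (moveA _ _ _ _ _ s3.connected s1 s2 x hx hρ hxx ?_)
    have := hx c1
    nlinarith

/-- No minimizer has a joining edge between a centre and an unshared leaf. -/
lemma claim2 {n : ℕ} {cen : Fin n → Fin n} {c0 c1 c2 w y2 y3 : Fin n}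
    (h : Cfg cen c0 c1 c2 c0 w y2 y3) (hM : MinG (cfgGraph cen c0 w y2 y3))
    (hw1 : w ≠ c1) (hwy : w ≠ y2) : False := by
  obtain ⟨x, hx, hxx⟩ := exists_perron _ hM.conn
  have hn := hM.hn
  have hcount := h.count
  have h0 := h.leaves_lt hM
  have h1 := Cfg.leaves_le hM c1
  have h2 := Cfg.leaves_le hM c2
  have hρ := hM.two
  have hC := h
  obtain ⟨h01, h02, h12, e0, e1, e2, hc, hx1, hx2, hy2, hy3⟩ := h
  have hnw : specRad (cfgGraph cen c0 w y2 y3) * x w = x c0 + x c1 := by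
    rw [← hxx, nsum_eq_of_iff _ x w {c0, c1}, Finset.sum_pair h01]
    intro u
    simp only [cfg_adj, Finset.mem_insert, Finset.mem_singleton]
    grind
  set ρ := specRad (cfgGraph cen c0 w y2 y3) with hρd
  have px0 := hx c0
  have px1 := hx c1
  have pxw := hx w
  rcases le_total (x c1) (x c0) with hle | hle
  · have hpos : 0 < (starLeaves cen c0).card := by omega
    obtain ⟨l, hl⟩ := Finset.card_pos.mp hpos
    rw [mem_starLeaves] at hl
    obtain ⟨s1, s2, s3⟩ := hC.swap0 hl.1 hl.2
    refine hM.min _ _ _ _ _ _ _ _ s3 (moveA _ _ _ _ _ s3.connected s1 s2 x hx hρ hxx ?_)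
    have : ρ * x w ≤ ρ * ((ρ - 1) * x c0) := by
      have : 2 * x c0 ≤ (ρ * (ρ - 1)) * x c0 :=
        mul_le_mul_of_nonneg_right (by nlinarith) px0.le
      nlinarith
    exact le_of_mul_le_mul_left this (by linarith)
  have hxw : x w ≤ x c1 := by nlinarith
  have hxw' : x w ≤ (ρ - 1) * x c1 := by nlinarith
  by_cases hex : ∃ l, cen l = c1 ∧ l ≠ c1 ∧ l ≠ w ∧ l ≠ y2
  · obtain ⟨l, hl1, hl2, hl3, hl4⟩ := hex
    have hC' : Cfg (Function.update cen w c0) c0 c1 c2 w c1 y2 y3 := by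
      refine ⟨h01, h02, h12, ?_, ?_, ?_, ?_, ?_, ?_, ?_, ?_⟩ <;>
        simp only [Function.update_apply] <;> grind
    have hGG : cfgGraph (Function.update cen w c0) w c1 y2 y3 = cfgGraph cen c0 w y2 y3 := by
      ext u v
      simp only [cfg_adj, Function.update_apply]
      grind
    have hll : Function.update cen w c0 l = c1 := by
      simp only [Function.update_apply]; grind
    obtain ⟨s1, s2, s3⟩ := hC'.swap1 hll hl2 hl4
    rw [hGG] at s1 s2
    exact hM.min _ _ _ _ _ _ _ _ s3 (moveA _ _ _ _ _ s3.connected s1 s2 x hx hρ hxx hxw')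
  · push Not at hex
    have hsub : starLeaves cen c1 ⊆ {w, y2} := by
      intro l hl
      rw [mem_starLeaves] at hl
      have := hex l hl.1 hl.2
      simp only [Finset.mem_insert, Finset.mem_singleton]
      tauto
    have hcard := (Finset.card_le_card hsub).trans Finset.card_le_two
    have hy2c : y2 ≠ c1 := by
      intro e
      have hsub' : starLeaves cen c1 ⊆ {w} := by
        intro l hl
        have := hsub hl
        rw [mem_starLeaves] at hl
        simp only [Finset.mem_insert, Finset.mem_singleton] at this ⊢
        grind
      have := Finset.card_le_card hsub'
      simp only [Finset.card_singleton] at this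
      omega
    have hy3c : y3 ≠ c2 := by
      intro e
      subst e
      have hr := hC.rev
      have := hr.leaves_lt (by rw [cfg_rev]; exact hM)
      omega
    have hpos : 1 < (starLeaves cen c2).card := by omega
    obtain ⟨l, hl, hly⟩ := Finset.exists_mem_ne hpos y3
    rw [mem_starLeaves] at hl
    have hnc1 : ρ * x c1 = x w + x y2 := by
      rw [← hxx, nsum_eq_of_iff _ x c1 {w, y2}, Finset.sum_pair hwy]
      intro u
      have := hex u
      simp only [cfg_adj, Finset.mem_insert, Finset.mem_singleton]
      grind
    have hny2 : ρ * x y2 = x c1 + x y3 := by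
      rw [← hxx, nsum_eq_of_iff _ x y2 {c1, y3}, Finset.sum_pair (by grind)]
      intro u
      simp only [cfg_adj, Finset.mem_insert, Finset.mem_singleton]
      grind
    have hny3 : ρ * x y3 = x y2 + x c2 := by
      rw [← hxx, nsum_eq_of_iff _ x y3 {y2, c2}, Finset.sum_pair (by grind)]
      intro u
      simp only [cfg_adj, Finset.mem_insert, Finset.mem_singleton]
      grind
    have py2 := hx y2
    have py3 := hx y3
    have pc2 := hx c2
    have q1 : x c1 ≤ x y2 := by nlinarith
    have q2 : x y2 ≤ x y3 := by nlinarith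
    have q3 : x y3 ≤ x c2 := by nlinarith
    have q4 : x y3 ≤ (ρ - 1) * x c2 := by nlinarith
    set cen' : Fin n → Fin n := fun v => if v = w then c0 else
      if v = c1 ∨ v = y2 ∨ v = y3 then y2 else cen v with hcen'
    have hC' : Cfg cen' c2 y2 c0 c2 y3 c1 w := by
      refine ⟨?_, ?_, ?_, ?_, ?_, ?_, ?_, ?_, ?_, ?_, ?_⟩ <;>
        (try simp only [hcen']) <;> grind
    have hGG : cfgGraph cen' c2 y3 c1 w = cfgGraph cen c0 w y2 y3 := by
      ext u v
      have := hex u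
      have := hex v
      simp only [cfg_adj, hcen']
      grind
    have hll : cen' l = c2 := by
      simp only [hcen']; grind
    obtain ⟨s1, s2, s3⟩ := hC'.swap0 hll hl.2
    rw [hGG] at s1 s2
    exact hM.min _ _ _ _ _ _ _ _ s3 (moveA _ _ _ _ _ s3.connected s1 s2 x hx hρ hxx q4)

/-- No minimizer has the middle centre as an end of a joining edge. -/
lemma claim3 {n : ℕ} {cen : Fin n → Fin n} {c0 c1 c2 x1 y2 y3 : Fin n}
    (h : Cfg cen c0 c1 c2 x1 c1 y2 y3) (hM : MinG (cfgGraph cen x1 c1 y2 y3)) : False := by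
  by_cases hx : x1 = c0
  · subst hx
    exact claim1 h hM
  obtain ⟨h01, h02, h12, e0, e1, e2, hc, hx1, hx2, hy2, hy3⟩ := h
  have hC' : Cfg (Function.update cen x1 c1) c0 c1 c2 c0 x1 y2 y3 := by
    refine ⟨h01, h02, h12, ?_, ?_, ?_, ?_, ?_, ?_, ?_, ?_⟩ <;>
      simp only [Function.update_apply] <;> grind
  have hGG : cfgGraph (Function.update cen x1 c1) c0 x1 y2 y3 = cfgGraph cen x1 c1 y2 y3 := by
    ext u v
    simp only [cfg_adj, Function.update_apply]
    grind
  refine claim2 hC' (by rw [hGG]; exact hM) ?_ ?_ <;> grind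

/-- No minimizer has a shared leaf in the middle star. -/
lemma claim4 {n : ℕ} {cen : Fin n → Fin n} {c0 c1 c2 x1 w y3 : Fin n}
    (h : Cfg cen c0 c1 c2 x1 w w y3) (hM : MinG (cfgGraph cen x1 w w y3)) : False := by
  by_cases hw : w = c1
  · subst hw
    exact claim3 h hM
  have hC := h
  obtain ⟨h01, h02, h12, e0, e1, e2, hc, hx1, hx2, hy2, hy3⟩ := h
  by_cases hex : ∃ l, cen l = c1 ∧ l ≠ c1 ∧ l ≠ w
  · obtain ⟨l, hl1, hl2, hl3⟩ := hex
    obtain ⟨x, hx, hxx⟩ := exists_perron _ hM.conn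
    obtain ⟨s1, s2, s3⟩ := hC.swap2 hw hl1 hl2 hl3
    refine hM.min _ _ _ _ _ _ _ _ s3
      (moveB _ _ c1 w l y3 x1 s3.connected s1 s2 ?_ ?_ ?_ ?_ ?_ x hx hM.two hxx)
    · rw [cfg_adj]; grind
    · rw [cfg_adj]; grind
    · grind
    · grind
    · grind
  · push Not at hex
    set cen' : Fin n → Fin n := fun v => if v = c1 ∨ v = w then w else cen v with hcen'
    have hC' : Cfg cen' c0 w c2 x1 w w y3 := by
      refine ⟨?_, ?_, ?_, ?_, ?_, ?_, ?_, ?_, ?_, ?_, ?_⟩ <;>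
        (try simp only [hcen']) <;> grind
    have hGG : cfgGraph cen' x1 w w y3 = cfgGraph cen x1 w w y3 := by
      ext u v
      have := hex u
      have := hex v
      simp only [cfg_adj, hcen']
      grind
    exact claim3 hC' (by rw [hGG]; exact hM)

/-- In a minimizer the first joining edge joins two leaves. -/
lemma claim5 {n : ℕ} {cen : Fin n → Fin n} {c0 c1 c2 x1 x2 y2 y3 : Fin n}
    (h : Cfg cen c0 c1 c2 x1 x2 y2 y3) (hM : MinG (cfgGraph cen x1 x2 y2 y3)) :
    x1 ≠ c0 ∧ x2 ≠ c1 ∧ x2 ≠ y2 ∧ ∃ l, cen l = c0 ∧ l ≠ c0 ∧ l ≠ x1 := by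
  have hxy : x2 ≠ y2 := by
    rintro rfl
    exact claim4 h hM
  have hx2 : x2 ≠ c1 := by
    rintro rfl
    exact claim3 h hM
  have hx1 : x1 ≠ c0 := by
    rintro rfl
    exact claim2 h hM hx2 hxy
  refine ⟨hx1, hx2, hxy, ?_⟩
  by_contra hex
  push Not at hex
  obtain ⟨h01, h02, h12, e0, e1, e2, hc, hx1', hx2', hy2, hy3⟩ := h
  set cen' : Fin n → Fin n := fun v => if v = c0 ∨ v = x1 then x1 else cen v with hcen'
  have hC' : Cfg cen' x1 c1 c2 x1 x2 y2 y3 := by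
    refine ⟨?_, ?_, ?_, ?_, ?_, ?_, ?_, ?_, ?_, ?_, ?_⟩ <;>
      (try simp only [hcen']) <;> grind
  have hGG : cfgGraph cen' x1 x2 y2 y3 = cfgGraph cen x1 x2 y2 y3 := by
    ext u v
    have := hex u
    have := hex v
    simp only [cfg_adj, hcen']
    grind
  exact claim2 hC' (by rw [hGG]; exact hM) hx2 hxy

/-- Configuration trees have spectral radius at least two. -/
lemma Cfg.two_le {n : ℕ} (hn : 11 ≤ n) {cen : Fin n → Fin n} {c0 c1 c2 x1 x2 y2 y3 : Fin n}
    (h : Cfg cen c0 c1 c2 x1 x2 y2 y3) : 2 ≤ specRad (cfgGraph cen x1 x2 y2 y3) := by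
  refine two_le_specRad _ h.connected (Finset.univ \ {c0, c1, c2, x1, x2, y2, y3}) ?_ ?_
  · have h1 := Finset.le_card_sdiff ({c0, c1, c2, x1, x2, y2, y3} : Finset (Fin n)) Finset.univ
    have h2 : ({c0, c1, c2, x1, x2, y2, y3} : Finset (Fin n)).card ≤ 7 := by
      refine (Finset.card_insert_le _ _).trans ?_
      exact Nat.succ_le_succ Finset.card_le_six
    rw [Finset.card_univ, Fintype.card_fin] at h1
    omega
  · intro v hv
    simp only [Finset.mem_sdiff, Finset.mem_univ, true_and, Finset.mem_insert,
      Finset.mem_singleton, not_or] at hv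
    refine ⟨cen v, fun u => ?_⟩
    obtain ⟨h01, h02, h12, e0, e1, e2, hc, hx1, hx2, hy2, hy3⟩ := h
    have := hc v
    have := hc u
    rw [cfg_adj]
    grind

/-- The centre map of `G2graph`. -/
def cenW (a b c : ℕ) : Fin 7 ⊕ (Fin a ⊕ Fin b ⊕ Fin c) → Fin 7 ⊕ (Fin a ⊕ Fin b ⊕ Fin c)
  | Sum.inl i => Sum.inl ((![0, 0, 3, 3, 3, 6, 6] : Fin 7 → Fin 7) i)
  | Sum.inr (Sum.inl _) => Sum.inl 0
  | Sum.inr (Sum.inr (Sum.inl _)) => Sum.inl 3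
  | Sum.inr (Sum.inr (Sum.inr _)) => Sum.inl 6

lemma G2graph_eq (a b c : ℕ) : G2graph a b c =
    cfgGraph (cenW a b c) (Sum.inl 1) (Sum.inl 2) (Sum.inl 4) (Sum.inl 5) := by
  ext u v
  rw [cfg_adj]
  rcases u with i | j | j | j <;> rcases v with i' | j' | j' | j' <;>
    simp only [G2graph, SimpleGraph.fromRel_adj, cenW, ne_eq, Sum.inl.injEq, reduceCtorEq,
      Sum.inr.injEq, and_false, false_and, exists_false, or_false, false_or, not_false_eq_true,
      true_and, exists_and_left, exists_eq', and_true, exists_eq_left', exists_eq, exists_and_right]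
  · revert i i'; decide
  all_goals tauto

lemma cenW_cfg (a b c : ℕ) : Cfg (cenW a b c) (Sum.inl 0) (Sum.inl 3) (Sum.inl 6)
    (Sum.inl 1) (Sum.inl 2) (Sum.inl 4) (Sum.inl 5) := by
  refine ⟨by simp, by simp, by simp, rfl, rfl, rfl, ?_, rfl, rfl, rfl, rfl⟩
  rintro (i | j | j | j)
  · fin_cases i <;> simp [cenW]
  all_goals simp [cenW]

/-- The test vector for `G2graph a b a`. -/
noncomputable def testW (a b : ℕ) (s : ℝ) : Fin 7 ⊕ (Fin a ⊕ Fin b ⊕ Fin a) → ℝ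
  | Sum.inl i => (![√s, s - a, √s * (s - a - 1), (s - a) * (s - 1) - s, √s * (s - a - 1), s - a,
      √s] : Fin 7 → ℝ) i
  | Sum.inr (Sum.inl _) => 1
  | Sum.inr (Sum.inr (Sum.inl _)) => ((s - a) * (s - 1) - s) / √s
  | Sum.inr (Sum.inr (Sum.inr _)) => 1

lemma testW_pos (a b : ℕ) (s : ℝ) (hs : 0 < s) (h1 : 0 < s - a - 1)
    (hA : 0 < (s - a) * (s - 1) - s) (v) : 0 < testW a b s v := by
  have hq : 0 < √s := Real.sqrt_pos.mpr hs
  have h2 : 0 < s - a := by linarith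
  rcases v with i | j | j | j
  · fin_cases i <;> simp only [testW] <;> simp <;> first | positivity | linarith
  · simp [testW]
  · simp only [testW]; positivity
  · simp [testW]

lemma testW_le (a b : ℕ) (s : ℝ) (hs : 0 < s)
    (hB : 2 * s * (s - a - 1) ≤ (s - b) * ((s - a) * (s - 1) - s)) (v) :
    nsum (G2graph a b a) (testW a b s) v ≤ √s * testW a b s v := by
  have hq : 0 < √s := Real.sqrt_pos.mpr hs
  have hqq : √s * √s = s := Real.mul_self_sqrt hs.le
  rcases v with i | j | j | j
  · fin_cases i
    · simp [nsum, G2graph, testW, Fin.sum_univ_seven, hqq]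
    · simp [nsum, G2graph, testW, Fin.sum_univ_seven]
      linarith
    · simp [nsum, G2graph, testW, Fin.sum_univ_seven]
      rw [← mul_assoc, hqq]; linarith
    · simp [nsum, G2graph, testW, Fin.sum_univ_seven]
      have : ∀ A : ℝ, (b : ℝ) * (A / √s) = √s * (b * A / s) := by
        intro A; rw [mul_div_assoc, ← mul_div_assoc, ← mul_div_assoc, ← mul_div_assoc]
        rw [div_eq_div_iff hq.ne' hs.ne']; nth_rewrite 1 [← hqq]; ring
      rw [this]
      have h3 : b * ((s - a) * (s - 1) - s) / s ≤ ((s - a) * (s - 1) - s) - 2 * (s - a - 1) := by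
        rw [div_le_iff₀ hs]; linarith
      nlinarith
    · simp [nsum, G2graph, testW, Fin.sum_univ_seven]
      rw [← mul_assoc, hqq]; linarith
    · simp [nsum, G2graph, testW, Fin.sum_univ_seven]
      linarith
    · simp [nsum, G2graph, testW, Fin.sum_univ_seven, hqq]
  · simp [nsum, G2graph, testW, Fin.sum_univ_seven]
  · simp [nsum, G2graph, testW, Fin.sum_univ_seven]
    field_simp; simp
  · simp [nsum, G2graph, testW, Fin.sum_univ_seven]

lemma Cfg.pull {V W : Type*} {cen : W → W} {c0 c1 c2 x1 x2 y2 y3 : W} (e : V ≃ W)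
    (h : Cfg cen c0 c1 c2 x1 x2 y2 y3) :
    Cfg (fun v => e.symm (cen (e v))) (e.symm c0) (e.symm c1) (e.symm c2) (e.symm x1) (e.symm x2)
      (e.symm y2) (e.symm y3) := by
  obtain ⟨h01, h02, h12, e0, e1, e2, hc, hx1, hx2, hy2, hy3⟩ := h
  constructor <;> simp_all

/-- Existence of a configuration tree with small spectral radius. -/
lemma exists_small {n : ℕ} (hn : 11 ≤ n) : ∃ H : SimpleGraph (Fin n), H.Connected ∧
    domNum H = 3 ∧ specRad H ^ 2 ≤ ((n / 3 : ℕ) : ℝ) + 1 := by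
  obtain ⟨a, b, hab, h1, hA, hB⟩ : ∃ a b : ℕ, n = 7 + (a + (b + a)) ∧
      (0 : ℝ) < ((n / 3 : ℕ) : ℝ) + 1 - a - 1 ∧
      (0 : ℝ) < (((n / 3 : ℕ) : ℝ) + 1 - a) * (((n / 3 : ℕ) : ℝ) + 1 - 1)
        - (((n / 3 : ℕ) : ℝ) + 1) ∧
      2 * (((n / 3 : ℕ) : ℝ) + 1) * (((n / 3 : ℕ) : ℝ) + 1 - a - 1) ≤
        ((((n / 3 : ℕ) : ℝ) + 1) - b) * ((((n / 3 : ℕ) : ℝ) + 1 - a) * (((n / 3 : ℕ) : ℝ) + 1 - 1)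
        - (((n / 3 : ℕ) : ℝ) + 1)) := by
    obtain ⟨k, hk⟩ : ∃ k, n / 3 = k + 3 := ⟨n / 3 - 3, by omega⟩
    rw [hk]
    have hr : n = 3 * (k + 3) ∨ n = 3 * (k + 3) + 1 ∨ n = 3 * (k + 3) + 2 := by omega
    have hk0 : (0 : ℝ) ≤ k := Nat.cast_nonneg k
    rcases hr with hr | hr | hr
    · refine ⟨k + 1, k, by omega, ?_, ?_, ?_⟩ <;> push_cast <;> nlinarith
    · have hk1 : (1 : ℝ) ≤ k := by
        have : 1 ≤ k := by omega
        exact_mod_cast this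
      refine ⟨k + 1, k + 1, by omega, ?_, ?_, ?_⟩ <;> push_cast <;> nlinarith
    · refine ⟨k + 2, k, by omega, ?_, ?_, ?_⟩ <;> push_cast <;> nlinarith
  set s : ℝ := ((n / 3 : ℕ) : ℝ) + 1 with hs
  have hs0 : 0 < s := by positivity
  have hcard : Fintype.card (Fin n) = Fintype.card (Fin 7 ⊕ (Fin a ⊕ Fin b ⊕ Fin a)) := by
    simp [← hab]
  let e : Fin n ≃ Fin 7 ⊕ (Fin a ⊕ Fin b ⊕ Fin a) := Fintype.equivOfCardEq hcard
  have hC := (cenW_cfg a b a).pull e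
  set H := cfgGraph (fun v => e.symm (cenW a b a (e v))) (e.symm (Sum.inl 1))
    (e.symm (Sum.inl 2)) (e.symm (Sum.inl 4)) (e.symm (Sum.inl 5)) with hH
  have hadj : ∀ u v, H.Adj u v ↔ (G2graph a b a).Adj (e u) (e v) := by
    intro u v
    rw [G2graph_eq, hH, cfg_adj, cfg_adj]
    simp only [Equiv.eq_symm_apply, Equiv.symm_apply_eq, ne_eq, EmbeddingLike.apply_eq_iff_eq]
  have hns : ∀ v, nsum H (fun u => testW a b s (e u)) v =
      nsum (G2graph a b a) (testW a b s) (e v) := by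
    intro v
    simp only [nsum]
    rw [← Equiv.sum_comp e (fun u => @ite ℝ ((G2graph a b a).Adj (e v) u)
      (Classical.propDecidable _) (testW a b s u) 0)]
    refine Finset.sum_congr rfl fun u _ => ?_
    by_cases hh : H.Adj v u
    · have := (hadj v u).mp hh
      simp [hh, this]
    · have : ¬ (G2graph a b a).Adj (e v) (e u) := fun t => hh ((hadj v u).mpr t)
      simp [hh, this]
  have hle : specRad H ≤ √s := by
    refine specRad_le_of H hC.connected (fun u => testW a b s (e u))
      (fun v => testW_pos a b s hs0 h1 hA _) _ fun v => ?_
    rw [hns]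
    exact testW_le a b s hs0 hB _
  have hsq : specRad H ^ 2 ≤ s := by
    have := specRad_nonneg H hC.connected
    have h2 := pow_le_pow_left₀ this hle 2
    rwa [Real.sq_sqrt hs0.le] at h2
  exact ⟨H, hC.connected, domNum_eq_three hn H hC.connected hsq _ hC.dom Finset.card_le_three, hsq⟩

/-- A leaf-leaf configuration tree is some `G2graph`. -/
lemma Cfg.iso {n : ℕ} {cen : Fin n → Fin n} {c0 c1 c2 x1 x2 y2 y3 : Fin n}
    (h : Cfg cen c0 c1 c2 x1 x2 y2 y3) (hx1 : x1 ≠ c0) (hx2 : x2 ≠ c1) (hxy : x2 ≠ y2)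
    (hy2 : y2 ≠ c1) (hy3 : y3 ≠ c2) (l l' : Fin n) (hl : cen l = c0 ∧ l ≠ c0 ∧ l ≠ x1)
    (hl' : cen l' = c2 ∧ l' ≠ c2 ∧ l' ≠ y3) :
    ∃ a b c : ℕ, 1 ≤ a ∧ 1 ≤ c ∧ a + b + c = n - 7 ∧
      Nonempty (cfgGraph cen x1 x2 y2 y3 ≃g G2graph a b c) := by
  have hcount := h.count
  set S0 := (starLeaves cen c0).erase x1 with hS0
  set S1 := ((starLeaves cen c1).erase x2).erase y2 with hS1
  set S2 := (starLeaves cen c2).erase y3 with hS2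
  have m0 : x1 ∈ starLeaves cen c0 := by rw [mem_starLeaves]; exact ⟨h.hx1, hx1⟩
  have m1 : x2 ∈ starLeaves cen c1 := by rw [mem_starLeaves]; exact ⟨h.hx2, hx2⟩
  have m1' : y2 ∈ (starLeaves cen c1).erase x2 := by
    rw [Finset.mem_erase, mem_starLeaves]; exact ⟨hxy.symm, h.hy2, hy2⟩
  have m2 : y3 ∈ starLeaves cen c2 := by rw [mem_starLeaves]; exact ⟨h.hy3, hy3⟩
  have k0 := Finset.card_erase_add_one m0
  have k1 := Finset.card_erase_add_one m1
  have k1' := Finset.card_erase_add_one m1'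
  have k2 := Finset.card_erase_add_one m2
  have p0 : 0 < S0.card := Finset.card_pos.mpr ⟨l, by
    rw [hS0, Finset.mem_erase, mem_starLeaves]; tauto⟩
  have p2 : 0 < S2.card := Finset.card_pos.mpr ⟨l', by
    rw [hS2, Finset.mem_erase, mem_starLeaves]; tauto⟩
  rw [← hS0] at k0
  rw [← hS1] at k1'
  rw [← hS2] at k2
  refine ⟨S0.card, S1.card, S2.card, p0, p2, by omega, ?_⟩
  let g : Fin 7 ⊕ (Fin S0.card ⊕ Fin S1.card ⊕ Fin S2.card) → Fin n
    | Sum.inl i => (![c0, x1, x2, c1, y2, y3, c2] : Fin 7 → Fin n) i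
    | Sum.inr (Sum.inl j) => (S0.equivFin.symm j : Fin n)
    | Sum.inr (Sum.inr (Sum.inl j)) => (S1.equivFin.symm j : Fin n)
    | Sum.inr (Sum.inr (Sum.inr j)) => (S2.equivFin.symm j : Fin n)
  have hsurj : Function.Surjective g := by
    intro v
    have t0 : v ∈ S0 → ∃ u, g u = v := fun hv =>
      ⟨Sum.inr (Sum.inl (S0.equivFin ⟨v, hv⟩)), by simp [g]⟩
    have t1 : v ∈ S1 → ∃ u, g u = v := fun hv =>
      ⟨Sum.inr (Sum.inr (Sum.inl (S1.equivFin ⟨v, hv⟩))), by simp [g]⟩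
    have t2 : v ∈ S2 → ∃ u, g u = v := fun hv =>
      ⟨Sum.inr (Sum.inr (Sum.inr (S2.equivFin ⟨v, hv⟩))), by simp [g]⟩
    simp only [hS0, hS1, hS2, Finset.mem_erase, mem_starLeaves] at t0 t1 t2
    by_cases q0 : v = c0
    · exact ⟨Sum.inl 0, q0.symm⟩
    by_cases q1 : v = x1
    · exact ⟨Sum.inl 1, q1.symm⟩
    by_cases q2 : v = x2
    · exact ⟨Sum.inl 2, q2.symm⟩
    by_cases q3 : v = c1
    · exact ⟨Sum.inl 3, q3.symm⟩
    by_cases q4 : v = y2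
    · exact ⟨Sum.inl 4, q4.symm⟩
    by_cases q5 : v = y3
    · exact ⟨Sum.inl 5, q5.symm⟩
    by_cases q6 : v = c2
    · exact ⟨Sum.inl 6, q6.symm⟩
    rcases h.hc v with q | q | q
    · exact t0 ⟨q1, q, q0⟩
    · exact t1 ⟨q4, q2, q, q3⟩
    · exact t2 ⟨q5, q, q6⟩
  have hbij : Function.Bijective g := by
    rw [Fintype.bijective_iff_surjective_and_card]
    refine ⟨hsurj, ?_⟩
    simp only [Fintype.card_sum, Fintype.card_fin]
    omega
  have hcen : ∀ u, cen (g u) = g (cenW _ _ _ u) := by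
    have f0 : ∀ v ∈ S0, cen v = c0 := fun v hv => by
      rw [hS0, Finset.mem_erase, mem_starLeaves] at hv; tauto
    have f1 : ∀ v ∈ S1, cen v = c1 := fun v hv => by
      rw [hS1, Finset.mem_erase, Finset.mem_erase, mem_starLeaves] at hv; tauto
    have f2 : ∀ v ∈ S2, cen v = c2 := fun v hv => by
      rw [hS2, Finset.mem_erase, mem_starLeaves] at hv; tauto
    rintro (i | j | j | j)
    · fin_cases i
      · exact h.e0
      · exact h.hx1
      · exact h.hx2
      · exact h.e1
      · exact h.hy2
      · exact h.hy3
      · exact h.e2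
    · exact f0 _ (S0.equivFin.symm j).2
    · exact f1 _ (S1.equivFin.symm j).2
    · exact f2 _ (S2.equivFin.symm j).2
  have g1 : x1 = g (Sum.inl 1) := rfl
  have g2 : x2 = g (Sum.inl 2) := rfl
  have g4 : y2 = g (Sum.inl 4) := rfl
  have g5 : y3 = g (Sum.inl 5) := rfl
  refine ⟨(RelIso.mk (Equiv.ofBijective g hbij) ?_ :
    G2graph S0.card S1.card S2.card ≃g cfgGraph cen x1 x2 y2 y3).symm⟩
  intro u v
  change (cfgGraph cen x1 x2 y2 y3).Adj (g u) (g v) ↔ _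
  rw [G2graph_eq, cfg_adj, cfg_adj, hcen, hcen]
  have hi := hbij.1
  have i1 : ∀ w, g w = x1 ↔ w = Sum.inl 1 := fun w =>
    ⟨fun t => hi (t.trans g1), fun t => by rw [t]; exact g1.symm⟩
  have i2 : ∀ w, g w = x2 ↔ w = Sum.inl 2 := fun w =>
    ⟨fun t => hi (t.trans g2), fun t => by rw [t]; exact g2.symm⟩
  have i4 : ∀ w, g w = y2 ↔ w = Sum.inl 4 := fun w =>
    ⟨fun t => hi (t.trans g4), fun t => by rw [t]; exact g4.symm⟩
  have i5 : ∀ w, g w = y3 ↔ w = Sum.inl 5 := fun w =>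
    ⟨fun t => hi (t.trans g5), fun t => by rw [t]; exact g5.symm⟩
  simp only [ne_eq, hi.eq_iff, i1, i2, i4, i5]

theorem minimizer_domNum_three_form (n : ℕ) (hn : 11 ≤ n)
    (G : SimpleGraph (Fin n)) (hconn : G.Connected) (hdom : domNum G = 3)
    (hmin : ∀ H : SimpleGraph (Fin n), H.Connected → domNum H = 3 →
      specRad G ≤ specRad H) :
    ∃ a b c : ℕ, 1 ≤ a ∧ 1 ≤ c ∧ a + b + c = n - 7 ∧
      Nonempty (G ≃g G2graph a b c) := by
  obtain ⟨H, hHc, hHd, hHρ⟩ := exists_small hn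
  have hle := hmin H hHc hHd
  have h0 := specRad_nonneg G hconn
  have hρ : specRad G ^ 2 ≤ ((n / 3 : ℕ) : ℝ) + 1 :=
    (pow_le_pow_left₀ h0 hle 2).trans hHρ
  have hmin' : ∀ (cen : Fin n → Fin n) (c0 c1 c2 x1 x2 y2 y3 : Fin n),
      Cfg cen c0 c1 c2 x1 x2 y2 y3 → ¬ (specRad (cfgGraph cen x1 x2 y2 y3) < specRad G) := by
    intro cen c0 c1 c2 x1 x2 y2 y3 hC hlt
    have hsq : specRad (cfgGraph cen x1 x2 y2 y3) ^ 2 ≤ ((n / 3 : ℕ) : ℝ) + 1 :=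
      (pow_le_pow_left₀ (specRad_nonneg _ hC.connected) hlt.le 2).trans hρ
    have hd := domNum_eq_three hn _ hC.connected hsq _ hC.dom Finset.card_le_three
    exact absurd (hmin _ hC.connected hd) (not_le.mpr hlt)
  obtain ⟨cen, c0, c1, c2, x1, x2, y2, y3, hC, hKG⟩ := exists_cfg G hconn hdom
  have hGK : cfgGraph cen x1 x2 y2 y3 = G := by
    by_contra hne
    exact hmin' _ _ _ _ _ _ _ _ hC (specRad_lt_of_lt _ _ hC.connected hconn hKG hne)
  have hM : MinG (cfgGraph cen x1 x2 y2 y3) := by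
    refine ⟨hn, hC.connected, ?_, hC.two_le hn, ?_⟩
    · rw [hGK]; exact hρ
    · rw [hGK]; exact hmin'
  obtain ⟨a1, a2, a3, l, hl⟩ := claim5 hC hM
  obtain ⟨b1, b2, -, l', hl'⟩ := claim5 hC.rev (by rw [cfg_rev]; exact hM)
  rw [← hGK]
  exact hC.iso a1 a2 a3 b2 b1 l l' hl hl'
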